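/- arXiv:1310.3794 — 3 statements merged into one kernel-verified Lean document; each statement's English description precedes it below -/
import Mathlib

section
/- The nine operators, arranged in a 3×3 grid as I⊗Z, Z⊗I, Z⊗Z (first row); X⊗I, I⊗X, X⊗X (second row); X⊗Z, Z⊗X, Y⊗Y (third row), form a quantum satisfying assignment of the magic square constraint system: each is self-adjoint with square I, operators in the same row or column commute, each row product is I, the first two column products are I, and the third column product is -I. -/
open Matrix Kronecker

noncomputable def pauliX : Matrix (Fin 2) (Fin 2) ℂ := !![0, 1; 1, 0]
noncomputable def pauliY : Matrix (Fin 2) (Fin 2) ℂ := !![0, -Complex.I; Complex.I, 0]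
noncomputable def pauliZ : Matrix (Fin 2) (Fin 2) ℂ := !![1, 0; 0, -1]

noncomputable def magicSquareAssignment : Fin 9 → Matrix (Fin 2 × Fin 2) (Fin 2 × Fin 2) ℂ
  | 0 => (1 : Matrix (Fin 2) (Fin 2) ℂ) ⊗ₖ pauliZ
  | 1 => pauliZ ⊗ₖ (1 : Matrix (Fin 2) (Fin 2) ℂ)
  | 2 => pauliZ ⊗ₖ pauliZ
  | 3 => pauliX ⊗ₖ (1 : Matrix (Fin 2) (Fin 2) ℂ)
  | 4 => (1 : Matrix (Fin 2) (Fin 2) ℂ) ⊗ₖ pauliX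
  | 5 => pauliX ⊗ₖ pauliX
  | 6 => pauliX ⊗ₖ pauliZ
  | 7 => pauliZ ⊗ₖ pauliX
  | 8 => pauliY ⊗ₖ pauliY

/-! Every row and column product is computed factorwise, so only single-qubit identities are needed.
The sign comes from `ZXY = i` and `XZY = -i`: the third row gives `(-i) * i = 1`, but the third
column gives `i * i = -1`. Commutation then follows from these products alone, since three elements
of square `1` whose product is central of square `1` commute pairwise. -/

section Involutions

variable {M : Type*} [Monoid M]

theorem commute_of_mul_self_eq_one {a b : M} (ha : a * a = 1) (hb : b * b = 1)
    (hab : a * b * (a * b) = 1) : Commute a b := by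
  have hba : b * a * (a * b) = 1 := by rw [mul_assoc, ← mul_assoc a a b, ha, one_mul, hb]
  exact (left_inv_eq_right_inv hba hab).symm

theorem commute_of_mul_three_mem_center {f : Fin 3 → M} {u : M} (hf : ∀ i, f i * f i = 1)
    (hu : u ∈ Set.center M) (huu : u * u = 1) (hfu : f 0 * f 1 * f 2 = u) (i j : Fin 3) :
    Commute (f i) (f j) := by
  have hcomm (x : M) : Commute x u := ((Set.mem_center_iff.mp hu).comm x).symm
  have h_prod : f 0 * f 1 = u * f 2 := by rw [← hfu, mul_assoc, hf, mul_one]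
  have h_two : f 2 = u * (f 0 * f 1) := by rw [h_prod, ← mul_assoc, huu, one_mul]
  have h01 : Commute (f 0) (f 1) := by
    refine commute_of_mul_self_eq_one (hf 0) (hf 1) ?_
    rw [h_prod, (hcomm (f 2)).mul_mul_mul_comm, huu, hf, one_mul]
  have h02 : Commute (f 0) (f 2) := by
    rw [h_two]
    exact (hcomm _).mul_right ((Commute.refl _).mul_right h01)
  have h12 : Commute (f 1) (f 2) := by
    rw [h_two]
    exact (hcomm _).mul_right (h01.symm.mul_right (Commute.refl _))
  fin_cases i <;> fin_cases j
  exacts [.refl _, h01, h02, h01.symm, .refl _, h12, h02.symm, h12.symm, .refl _]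

end Involutions

section Kronecker

variable {R m n : Type*}

theorem isHermitian_kronecker [CommMagma R] [StarMul R] {A : Matrix m m R} {B : Matrix n n R}
    (hA : A.IsHermitian) (hB : B.IsHermitian) : (A ⊗ₖ B).IsHermitian := by
  rw [IsHermitian, conjTranspose_kronecker, hA.eq, hB.eq]

variable [CommSemiring R] [Fintype m] [DecidableEq m] [Fintype n] [DecidableEq n]

theorem kronecker_mul_self_eq_one {A : Matrix m m R} {B : Matrix n n R}
    (hA : A * A = 1) (hB : B * B = 1) : (A ⊗ₖ B) * (A ⊗ₖ B) = 1 := by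
  rw [← mul_kronecker_mul, hA, hB, one_kronecker_one]

theorem kronecker_mul_three_eq_smul_one {A A' A'' : Matrix m m R} {B B' B'' : Matrix n n R}
    {a b : R} (hA : A * A' * A'' = a • 1) (hB : B * B' * B'' = b • 1) :
    (A ⊗ₖ B) * (A' ⊗ₖ B') * (A'' ⊗ₖ B'') = (a * b) • 1 := by
  rw [← mul_kronecker_mul, ← mul_kronecker_mul, hA, hB, smul_kronecker, kronecker_smul,
    one_kronecker_one, smul_smul]

end Kronecker

theorem isHermitian_pauliX : pauliX.IsHermitian := by
  ext i j; fin_cases i <;> fin_cases j <;> simp [pauliX]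

theorem isHermitian_pauliY : pauliY.IsHermitian := by
  ext i j; fin_cases i <;> fin_cases j <;> simp [pauliY]

theorem isHermitian_pauliZ : pauliZ.IsHermitian := by
  ext i j; fin_cases i <;> fin_cases j <;> simp [pauliZ]

theorem pauliX_mul_self : pauliX * pauliX = 1 := by
  simp [pauliX, one_fin_two]

theorem pauliY_mul_self : pauliY * pauliY = 1 := by
  simp [pauliY, one_fin_two]

theorem pauliZ_mul_self : pauliZ * pauliZ = 1 := by
  simp [pauliZ, one_fin_two]

theorem pauliZ_mul_pauliX_mul_pauliY : pauliZ * pauliX * pauliY = Complex.I • 1 := by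
  simp [pauliX, pauliY, pauliZ, one_fin_two]

theorem pauliX_mul_pauliZ_mul_pauliY : pauliX * pauliZ * pauliY = -Complex.I • 1 := by
  simp [pauliX, pauliY, pauliZ, one_fin_two]

theorem isHermitian_magicSquareAssignment (j : Fin 9) : (magicSquareAssignment j).IsHermitian := by
  have hI : (1 : Matrix (Fin 2) (Fin 2) ℂ).IsHermitian := isHermitian_one
  have hX := isHermitian_pauliX
  have hY := isHermitian_pauliY
  have hZ := isHermitian_pauliZ
  fin_cases j
  exacts [isHermitian_kronecker hI hZ, isHermitian_kronecker hZ hI, isHermitian_kronecker hZ hZ,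
    isHermitian_kronecker hX hI, isHermitian_kronecker hI hX, isHermitian_kronecker hX hX,
    isHermitian_kronecker hX hZ, isHermitian_kronecker hZ hX, isHermitian_kronecker hY hY]

theorem magicSquareAssignment_mul_self (j : Fin 9) :
    magicSquareAssignment j * magicSquareAssignment j = 1 := by
  have hI : (1 : Matrix (Fin 2) (Fin 2) ℂ) * 1 = 1 := one_mul 1
  have hX := pauliX_mul_self
  have hY := pauliY_mul_self
  have hZ := pauliZ_mul_self
  fin_cases j
  exacts [kronecker_mul_self_eq_one hI hZ, kronecker_mul_self_eq_one hZ hI,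
    kronecker_mul_self_eq_one hZ hZ, kronecker_mul_self_eq_one hX hI,
    kronecker_mul_self_eq_one hI hX, kronecker_mul_self_eq_one hX hX,
    kronecker_mul_self_eq_one hX hZ, kronecker_mul_self_eq_one hZ hX,
    kronecker_mul_self_eq_one hY hY]

/-- The nine operators of `magicSquareAssignment` as a `3 × 3` grid, listed row by row: the entry in
row `r` and column `c` is operator number `3 * r + c`. -/
noncomputable def magicSquareGrid (r c : Fin 3) : Matrix (Fin 2 × Fin 2) (Fin 2 × Fin 2) ℂ :=
  magicSquareAssignment (finProdFinEquiv (r, c))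

theorem magicSquareGrid_mul_self (r c : Fin 3) : magicSquareGrid r c * magicSquareGrid r c = 1 :=
  magicSquareAssignment_mul_self _

theorem magicSquareGrid_row_mul (r : Fin 3) :
    magicSquareGrid r 0 * magicSquareGrid r 1 * magicSquareGrid r 2 = 1 := by
  fin_cases r
  · change (1 ⊗ₖ pauliZ) * (pauliZ ⊗ₖ 1) * (pauliZ ⊗ₖ pauliZ) = 1
    simp [← mul_kronecker_mul, pauliZ_mul_self]
  · change (pauliX ⊗ₖ 1) * (1 ⊗ₖ pauliX) * (pauliX ⊗ₖ pauliX) = 1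
    simp [← mul_kronecker_mul, pauliX_mul_self]
  · change (pauliX ⊗ₖ pauliZ) * (pauliZ ⊗ₖ pauliX) * (pauliY ⊗ₖ pauliY) = 1
    simp [kronecker_mul_three_eq_smul_one pauliX_mul_pauliZ_mul_pauliY
      pauliZ_mul_pauliX_mul_pauliY]

theorem magicSquareGrid_col_zero_mul :
    magicSquareGrid 0 0 * magicSquareGrid 1 0 * magicSquareGrid 2 0 = 1 := by
  change (1 ⊗ₖ pauliZ) * (pauliX ⊗ₖ 1) * (pauliX ⊗ₖ pauliZ) = 1
  simp [← mul_kronecker_mul, pauliX_mul_self, pauliZ_mul_self]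

theorem magicSquareGrid_col_one_mul :
    magicSquareGrid 0 1 * magicSquareGrid 1 1 * magicSquareGrid 2 1 = 1 := by
  change (pauliZ ⊗ₖ 1) * (1 ⊗ₖ pauliX) * (pauliZ ⊗ₖ pauliX) = 1
  simp [← mul_kronecker_mul, pauliX_mul_self, pauliZ_mul_self]

theorem magicSquareGrid_col_two_mul :
    magicSquareGrid 0 2 * magicSquareGrid 1 2 * magicSquareGrid 2 2 = -1 := by
  change (pauliZ ⊗ₖ pauliZ) * (pauliX ⊗ₖ pauliX) * (pauliY ⊗ₖ pauliY) = -1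
  rw [kronecker_mul_three_eq_smul_one pauliZ_mul_pauliX_mul_pauliY pauliZ_mul_pauliX_mul_pauliY,
    Complex.I_mul_I, neg_one_smul]

theorem commute_magicSquareGrid_of_row (r c c' : Fin 3) :
    Commute (magicSquareGrid r c) (magicSquareGrid r c') :=
  commute_of_mul_three_mem_center (magicSquareGrid_mul_self r) Set.one_mem_center (one_mul 1)
    (magicSquareGrid_row_mul r) c c'

theorem commute_magicSquareGrid_of_col (c r r' : Fin 3) :
    Commute (magicSquareGrid r c) (magicSquareGrid r' c) := by
  obtain ⟨u, hu, huu, h_prod⟩ : ∃ u ∈ Set.center (Matrix (Fin 2 × Fin 2) (Fin 2 × Fin 2) ℂ),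
      u * u = 1 ∧ magicSquareGrid 0 c * magicSquareGrid 1 c * magicSquareGrid 2 c = u := by
    fin_cases c
    · exact ⟨1, Set.one_mem_center, one_mul 1, magicSquareGrid_col_zero_mul⟩
    · exact ⟨1, Set.one_mem_center, one_mul 1, magicSquareGrid_col_one_mul⟩
    · exact ⟨-1, Set.neg_mem_center Set.one_mem_center, by rw [neg_mul_neg, one_mul],
        magicSquareGrid_col_two_mul⟩
  exact commute_of_mul_three_mem_center (f := fun r ↦ magicSquareGrid r c)
    (fun r ↦ magicSquareGrid_mul_self r c) hu huu h_prod r r'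

theorem commute_magicSquareAssignment {j k : Fin 9}
    (hjk : j.val / 3 = k.val / 3 ∨ j.val % 3 = k.val % 3) :
    Commute (magicSquareAssignment j) (magicSquareAssignment k) := by
  obtain ⟨⟨r, c⟩, rfl⟩ := (finProdFinEquiv (m := 3) (n := 3)).surjective j
  obtain ⟨⟨r', c'⟩, rfl⟩ := (finProdFinEquiv (m := 3) (n := 3)).surjective k
  simp only [finProdFinEquiv_apply_val] at hjk
  rcases hjk with h_row | h_col
  · obtain rfl : r = r' := by omega
    exact commute_magicSquareGrid_of_row r c c'
  · obtain rfl : c = c' := by omega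
    exact commute_magicSquareGrid_of_col c r r'

/-- The nine Pauli tensor products `I⊗Z, Z⊗I, Z⊗Z; X⊗I, I⊗X, X⊗X; X⊗Z, Z⊗X, Y⊗Y`
form a quantum satisfying assignment of the magic square constraint system. -/
theorem magic_square_pauli_assignment :
    (∀ j, (magicSquareAssignment j).IsHermitian) ∧
    (∀ j, magicSquareAssignment j * magicSquareAssignment j = 1) ∧
    (∀ j k : Fin 9, (j.val / 3 = k.val / 3 ∨ j.val % 3 = k.val % 3) →
      Commute (magicSquareAssignment j) (magicSquareAssignment k)) ∧
    magicSquareAssignment 0 * magicSquareAssignment 1 * magicSquareAssignment 2 = 1 ∧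
    magicSquareAssignment 3 * magicSquareAssignment 4 * magicSquareAssignment 5 = 1 ∧
    magicSquareAssignment 6 * magicSquareAssignment 7 * magicSquareAssignment 8 = 1 ∧
    magicSquareAssignment 0 * magicSquareAssignment 3 * magicSquareAssignment 6 = 1 ∧
    magicSquareAssignment 1 * magicSquareAssignment 4 * magicSquareAssignment 7 = 1 ∧
    magicSquareAssignment 2 * magicSquareAssignment 5 * magicSquareAssignment 8 = -1 := by
  exact ⟨isHermitian_magicSquareAssignment, magicSquareAssignment_mul_self,
    fun _ _ ↦ commute_magicSquareAssignment, magicSquareGrid_row_mul 0, magicSquareGrid_row_mul 1,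
    magicSquareGrid_row_mul 2, magicSquareGrid_col_zero_mul, magicSquareGrid_col_one_mul,
    magicSquareGrid_col_two_mul⟩
end

section
/- If vertices u, v, w form a triangle with a 3-coloring operator assignment (projections u_α, v_α, w_α for α = 0,1,2, each vertex's triple summing to I, with u_α v_α = v_α u_α = u_α w_α = w_α u_α = v_α w_α = w_α v_α = 0 for all α), then u_α + v_α + w_α = I for each α = 0,1,2. -/
open Matrix

/-!
The defects `Q α = 1 - (u α + v α + w α)` are idempotents with `Q 0 + Q 1 + Q 2 = 0`, and `Q α`
annihilates `u α` and `v α` on both sides. For the three colors `α, β, γ`, inserting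
`u α + u β + u γ = 1` gives `Q α * Q β = Q α * u γ * Q β = -(Q α * u γ * Q α)`, because
`u γ * (Q α + Q β) = -(u γ * Q γ) = 0`, and `Q β * Q α` takes the same value. So the defects
commute, whence `u α` and `u β` kill `Q α * Q β`, which is therefore fixed by `u γ`, and likewise by
`v γ`. As `u γ * v γ = 0`, it vanishes, and multiplying `Q α + Q β + Q γ = 0` by `Q α` leaves
`Q α = 0`.
-/

section AnnihilatedPartition

variable {ι R : Type*} [Ring R] {u v Q : ι → R} {α β γ : ι}

theorem mul_eq_mul_mul_of_add_add_eq_one {a b c p q : R} (habc : a + b + c = 1)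
    (hpa : p * a = 0) (hbq : b * q = 0) : p * q = p * c * q := by
  calc p * q = p * (a + b + c) * q := by rw [habc, mul_one]
    _ = p * a * q + p * (b * q) + p * c * q := by noncomm_ring
    _ = p * c * q := by rw [hpa, hbq, zero_mul, mul_zero, zero_add, zero_add]

theorem commute_of_annihilated_partition (hu : u α + u β + u γ = 1) (hQ : Q α + Q β + Q γ = 0)
    (huQ : ∀ δ, u δ * Q δ = 0) (hQu : ∀ δ, Q δ * u δ = 0) : Commute (Q α) (Q β) := by
  have hQγ : Q α + Q β = -Q γ := eq_neg_of_add_eq_zero_left hQ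
  have hleft : u γ * Q α + u γ * Q β = 0 := by rw [← mul_add, hQγ, mul_neg, huQ, neg_zero]
  have hright : Q α * u γ + Q β * u γ = 0 := by rw [← add_mul, hQγ, neg_mul, hQu, neg_zero]
  calc Q α * Q β = Q α * u γ * Q β :=
        mul_eq_mul_mul_of_add_add_eq_one hu (hQu α) (huQ β)
    _ = -(Q α * u γ) * Q α := by
      rw [mul_assoc, eq_neg_of_add_eq_zero_right hleft, mul_neg, neg_mul, mul_assoc]
    _ = Q β * u γ * Q α := by rw [eq_neg_of_add_eq_zero_right hright]
    _ = Q β * Q α :=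
      (mul_eq_mul_mul_of_add_add_eq_one (add_comm (u α) _ ▸ hu) (hQu β) (huQ α)).symm

theorem mul_mul_eq_of_annihilated_partition (hu : u α + u β + u γ = 1)
    (hQ : Q α + Q β + Q γ = 0) (huQ : ∀ δ, u δ * Q δ = 0) (hQu : ∀ δ, Q δ * u δ = 0) :
    u γ * (Q α * Q β) = Q α * Q β := by
  have hα : u α * (Q α * Q β) = 0 := by rw [← mul_assoc, huQ, zero_mul]
  have hβ : u β * (Q α * Q β) = 0 := by
    rw [(commute_of_annihilated_partition hu hQ huQ hQu).eq, ← mul_assoc, huQ, zero_mul]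
  calc u γ * (Q α * Q β) = (u α + u β + u γ) * (Q α * Q β) := by
        rw [add_mul, add_mul, hα, hβ, zero_add, zero_add]
    _ = Q α * Q β := by rw [hu, one_mul]

theorem mul_eq_zero_of_annihilated_partitions (hu : u α + u β + u γ = 1)
    (hv : v α + v β + v γ = 1) (hQ : Q α + Q β + Q γ = 0) (huQ : ∀ δ, u δ * Q δ = 0)
    (hQu : ∀ δ, Q δ * u δ = 0) (hvQ : ∀ δ, v δ * Q δ = 0) (hQv : ∀ δ, Q δ * v δ = 0)
    (huv : u γ * v γ = 0) : Q α * Q β = 0 := by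
  calc Q α * Q β = u γ * (v γ * (Q α * Q β)) := by
        rw [mul_mul_eq_of_annihilated_partition hv hQ hvQ hQv,
          mul_mul_eq_of_annihilated_partition hu hQ huQ hQu]
    _ = 0 := by rw [← mul_assoc, huv, zero_mul]

theorem eq_zero_of_annihilated_partitions (hidem : IsIdempotentElem (Q α))
    (hu : u α + u β + u γ = 1) (hv : v α + v β + v γ = 1) (hQ : Q α + Q β + Q γ = 0)
    (huQ : ∀ δ, u δ * Q δ = 0) (hQu : ∀ δ, Q δ * u δ = 0) (hvQ : ∀ δ, v δ * Q δ = 0)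
    (hQv : ∀ δ, Q δ * v δ = 0) (huv : ∀ δ, u δ * v δ = 0) : Q α = 0 := by
  have hαβ : Q α * Q β = 0 :=
    mul_eq_zero_of_annihilated_partitions hu hv hQ huQ hQu hvQ hQv (huv γ)
  have hαγ : Q α * Q γ = 0 := by
    rw [add_right_comm] at hu hv hQ
    exact mul_eq_zero_of_annihilated_partitions hu hv hQ huQ hQu hvQ hQv (huv β)
  calc Q α = Q α * (Q α + Q β + Q γ) := by
        rw [mul_add, mul_add, hidem.eq, hαβ, hαγ, add_zero, add_zero]
    _ = 0 := by rw [hQ, mul_zero]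

end AnnihilatedPartition

theorem add_add_rotate_fin_three {M : Type*} [AddCommMonoid M] (f : Fin 3 → M) (α : Fin 3) :
    f α + f (α + 1) + f (α + 2) = f 0 + f 1 + f 2 := by
  calc f α + f (α + 1) + f (α + 2) = ∑ β, f (α + β) := by rw [Fin.sum_univ_three, add_zero]
    _ = ∑ β, f β := Equiv.sum_comp (Equiv.addLeft α) f
    _ = f 0 + f 1 + f 2 := Fin.sum_univ_three f

theorem coloring_triangle_sum_general {R : Type*} [Ring R] {u v w : Fin 3 → R}
    (hu : ∀ α, IsIdempotentElem (u α)) (hv : ∀ α, IsIdempotentElem (v α))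
    (hw : ∀ α, IsIdempotentElem (w α))
    (hu_sum : u 0 + u 1 + u 2 = 1) (hv_sum : v 0 + v 1 + v 2 = 1)
    (hw_sum : w 0 + w 1 + w 2 = 1)
    (huv : ∀ α, u α * v α = 0 ∧ v α * u α = 0)
    (huw : ∀ α, u α * w α = 0 ∧ w α * u α = 0)
    (hvw : ∀ α, v α * w α = 0 ∧ w α * v α = 0) (α : Fin 3) :
    u α + v α + w α = 1 := by
  let Q (β : Fin 3) : R := 1 - (u β + v β + w β)
  have hidem (β : Fin 3) : IsIdempotentElem (Q β) := by
    refine (((hu β).add (hv β) ?_).add (hw β) ?_).one_sub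
    · rw [(huv β).1, (huv β).2, add_zero]
    · simp only [add_mul, mul_add, huw β, hvw β, add_zero]
  have huQ (β : Fin 3) : u β * Q β = 0 := by simp [Q, mul_sub, mul_add, (hu β).eq, huv β, huw β]
  have hQu (β : Fin 3) : Q β * u β = 0 := by simp [Q, sub_mul, add_mul, (hu β).eq, huv β, huw β]
  have hvQ (β : Fin 3) : v β * Q β = 0 := by simp [Q, mul_sub, mul_add, (hv β).eq, huv β, hvw β]
  have hQv (β : Fin 3) : Q β * v β = 0 := by simp [Q, sub_mul, add_mul, (hv β).eq, huv β, hvw β]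
  have hQ : Q 0 + Q 1 + Q 2 = 0 := by
    calc Q 0 + Q 1 + Q 2
        = (1 - (u 0 + u 1 + u 2)) + (1 - (v 0 + v 1 + v 2)) + (1 - (w 0 + w 1 + w 2)) := by
          simp only [Q]; abel
      _ = 0 := by rw [hu_sum, hv_sum, hw_sum, sub_self, add_zero, add_zero]
  rw [← add_add_rotate_fin_three _ α] at hu_sum hv_sum hQ
  have hQα : Q α = 0 := eq_zero_of_annihilated_partitions (hidem α) hu_sum hv_sum hQ huQ hQu hvQ hQv
    fun β => (huv β).1
  exact (sub_eq_zero.1 hQα).symm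

/-- Lemma (triangle): if `u, v, w` form a triangle in a graph with a 3-coloring
operator assignment, then `u_α + v_α + w_α = I` for each color `α`. -/
theorem coloring_triangle_sum {d : ℕ}
    (u v w : Fin 3 → Matrix (Fin d) (Fin d) ℂ)
    (hu_sa : ∀ α, (u α).IsHermitian) (hv_sa : ∀ α, (v α).IsHermitian)
    (hw_sa : ∀ α, (w α).IsHermitian)
    (hu_proj : ∀ α, u α * u α = u α) (hv_proj : ∀ α, v α * v α = v α)
    (hw_proj : ∀ α, w α * w α = w α)
    (hu_sum : u 0 + u 1 + u 2 = 1) (hv_sum : v 0 + v 1 + v 2 = 1)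
    (hw_sum : w 0 + w 1 + w 2 = 1)
    (huv : ∀ α, u α * v α = 0 ∧ v α * u α = 0)
    (huw : ∀ α, u α * w α = 0 ∧ w α * u α = 0)
    (hvw : ∀ α, v α * w α = 0 ∧ w α * v α = 0) :
    ∀ α, u α + v α + w α = 1 :=
  coloring_triangle_sum_general hu_proj hv_proj hw_proj hu_sum hv_sum hw_sum huv huw hvw
end

section
/- Let a,b,c,d,e,f be the six vertices of the triangular prism graph (triangles (a,b,c) and (d,e,f), with matching edges (a,d), (b,f), (c,f)... specifically edges: (a,b),(b,c),(a,c),(d,e),(e,f),(d,f),(a,d),(b,e),(c,f)). Given a 3-coloring operator assignment of this graph, the projections assigned to the non-adjacent vertices a and e commute: a_α e_β = e_β a_α for all colors α, β ∈ {0,1,2}. -/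
open Matrix

/-!
There are only three colors, so adjacent vertices commute and the three projections of a triangle
that carry a fixed color add up to `1`. Substituting `e_β = 1 - d_β - f_β`, every term of
`a_α e_β c_α` vanishes: `d_β` can be moved past `a_α` and `f_β` past `c_α`, which brings `a_α` and
`c_α` together. Also `a_α e_β b_α = a_α b_α e_β = 0`. Since `a_α + b_α + c_α = 1`, this leaves
`a_α e_β = a_α e_β a_α`, and by the mirror image of this argument `e_β a_α = a_α e_β a_α`.
-/

/-- A 3-coloring operator assignment of the graph `G` in a semiring: one idempotent for each vertex
and color. Orthogonality of the idempotents at a single vertex is not built in: over a ring, it is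
automatic at a vertex with a neighbor, by `IsOperatorThreeColoring.mul_eq_zero_of_ne`. -/
structure IsOperatorThreeColoring {V R : Type*} [Semiring R] (G : SimpleGraph V)
    (P : V → Fin 3 → R) : Prop where
  isIdempotentElem (v : V) (α : Fin 3) : IsIdempotentElem (P v α)
  sum_eq_one (v : V) : ∑ α, P v α = 1
  mul_eq_zero_of_adj ⦃u v : V⦄ (huv : G.Adj u v) (α : Fin 3) : P u α * P v α = 0

/-- The triangular prism: the triangles `0 1 2` and `3 4 5` joined by the matching
`0 3`, `1 4`, `2 5`. -/
def prismGraph : SimpleGraph (Fin 6) :=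
  .fromRel fun u v ↦
    (u, v) ∈ [(0, 1), (1, 2), (0, 2), (3, 4), (4, 5), (3, 5), (0, 3), (1, 4), (2, 5)]

instance : DecidableRel prismGraph.Adj :=
  inferInstanceAs (DecidableRel (SimpleGraph.fromRel _).Adj)

section SemigroupWithZero

variable {S : Type*} [SemigroupWithZero S] {p q x : S}

theorem mul_mul_eq_zero_of_commute_left (hpq : p * q = 0) (hx : Commute p x) : p * x * q = 0 := by
  rw [hx.eq, mul_assoc, hpq, mul_zero]

theorem mul_mul_eq_zero_of_commute_right (hpq : p * q = 0) (hx : Commute x q) :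
    p * x * q = 0 := by
  rw [mul_assoc, hx.eq, ← mul_assoc, hpq, zero_mul]

end SemigroupWithZero

section Ring

variable {R : Type*} [Ring R] {p q r : R}

theorem commute_of_add_add_eq_one (hp : IsIdempotentElem p) (hq : IsIdempotentElem q)
    (hr : IsIdempotentElem r) (h : p + q + r = 1) : Commute p q := by
  have hadd : IsIdempotentElem (p + q) := by
    rw [eq_sub_of_add_eq h]
    exact hr.one_sub
  have hanti : p * q + q * p = 0 := (hp.add_iff hq).1 hadd
  have hleft : p * q + p * q * p = 0 := by
    simpa only [mul_add, ← mul_assoc, hp.eq, mul_zero] using congrArg (p * ·) hanti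
  have hright : p * q * p + q * p = 0 := by
    simpa only [add_mul, mul_assoc, hp.eq, zero_mul] using congrArg (· * p) hanti
  exact (eq_neg_of_add_eq_zero_left hleft).trans (eq_neg_of_add_eq_zero_right hright).symm

theorem mul_mul_eq_neg_of_add_add_eq_one (hp : IsIdempotentElem p) (hq : IsIdempotentElem q)
    (hr : IsIdempotentElem r) (h : p + q + r = 1) : p * q * r = -(p * q) := by
  have hpqp : p * q * p = p * q := by
    rw [mul_assoc, ← (commute_of_add_add_eq_one hp hq hr h).eq, ← mul_assoc, hp.eq]
  have hpqq : p * q * q = p * q := by rw [mul_assoc, hq.eq]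
  rw [eq_sub_of_add_eq' h, mul_sub, mul_add, hpqp, hpqq, mul_one, sub_add_cancel_left]

end Ring

namespace IsOperatorThreeColoring

section Semiring

variable {V R : Type*} [Semiring R] {G : SimpleGraph V} {P : V → Fin 3 → R} {α β : Fin 3}

theorem of_fromRel {r : V → V → Prop} (hidem : ∀ v α, IsIdempotentElem (P v α))
    (hsum : ∀ v, P v 0 + P v 1 + P v 2 = 1)
    (hr : ∀ u v, r u v → ∀ α, P u α * P v α = 0 ∧ P v α * P u α = 0) :
    IsOperatorThreeColoring (.fromRel r) P where
  isIdempotentElem := hidem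
  sum_eq_one v := by rw [Fin.sum_univ_three, hsum]
  mul_eq_zero_of_adj u v huv α := huv.2.elim (fun h ↦ (hr u v h α).1) fun h ↦ (hr v u h α).2

theorem exists_add_add_eq_one (hP : IsOperatorThreeColoring G P) (hαβ : α ≠ β) :
    ∃ γ, ∀ v, P v α + P v β + P v γ = 1 := by
  obtain ⟨γ, hγα, hγβ, huniv⟩ : ∃ γ, γ ≠ α ∧ γ ≠ β ∧ Finset.univ = {α, β, γ} := by
    revert α β
    decide
  refine ⟨γ, fun v ↦ ?_⟩
  rw [← hP.sum_eq_one v, huniv, Finset.sum_insert (by simp [hαβ, hγα.symm]),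
    Finset.sum_pair hγβ.symm, add_assoc]

end Semiring

section Ring

variable {V R : Type*} [Ring R] {G : SimpleGraph V} {P : V → Fin 3 → R}
  {u v w x y z : V} {α β γ : Fin 3}

theorem mul_eq_zero_of_ne (hP : IsOperatorThreeColoring G P) (huv : G.Adj u v)
    (hαβ : α ≠ β) : P u α * P u β = 0 := by
  obtain ⟨γ, hsum⟩ := hP.exists_add_add_eq_one hαβ
  have hcomm : Commute (P u α) (P u β) :=
    commute_of_add_add_eq_one (hP.isIdempotentElem u α) (hP.isIdempotentElem u β)
      (hP.isIdempotentElem u γ) (hsum u)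
  have hneg : P u α * P u β * P u γ = -(P u α * P u β) :=
    mul_mul_eq_neg_of_add_add_eq_one (hP.isIdempotentElem u α) (hP.isIdempotentElem u β)
      (hP.isIdempotentElem u γ) (hsum u)
  have hα : P u α * P u β * P v α = 0 :=
    mul_mul_eq_zero_of_commute_left (hP.mul_eq_zero_of_adj huv α) hcomm
  have hβ : P u α * P u β * P v β = 0 := by rw [mul_assoc, hP.mul_eq_zero_of_adj huv, mul_zero]
  have hγ : P u α * P u β * P v γ = 0 := by
    rw [← neg_eq_zero, ← neg_mul, ← hneg, mul_assoc, hP.mul_eq_zero_of_adj huv, mul_zero]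
  rw [← mul_one (P u α * P u β), ← hsum v, mul_add, mul_add, hα, hβ, hγ, add_zero, add_zero]

theorem mul_mul_eq_zero_of_ne (hP : IsOperatorThreeColoring G P) (huv : G.Adj u v)
    (hαγ : α ≠ γ) (β : Fin 3) : P u α * P v β * P u γ = 0 := by
  have hend (δ : Fin 3) (hδ : δ = α ∨ δ = γ) : P u α * P v δ * P u γ = 0 := by
    rcases hδ with rfl | rfl
    · rw [hP.mul_eq_zero_of_adj huv, zero_mul]
    · rw [mul_assoc, hP.mul_eq_zero_of_adj huv.symm, mul_zero]
  by_cases hβ : β = α ∨ β = γ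
  · exact hend β hβ
  calc P u α * P v β * P u γ
      = ∑ δ, P u α * P v δ * P u γ :=
        (Fintype.sum_eq_single β fun δ hδ ↦ hend δ (by omega)).symm
    _ = P u α * P u γ := by rw [← Finset.sum_mul, ← Finset.mul_sum, hP.sum_eq_one, mul_one]
    _ = 0 := hP.mul_eq_zero_of_ne huv hαγ

theorem commute_of_adj (hP : IsOperatorThreeColoring G P) (huv : G.Adj u v) (α β : Fin 3) :
    Commute (P u α) (P v β) :=
  calc P u α * P v β
      = ∑ γ, P u α * P v β * P u γ := by rw [← Finset.mul_sum, hP.sum_eq_one, mul_one]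
    _ = P u α * P v β * P u α := Fintype.sum_eq_single α fun _ hγ ↦
        hP.mul_mul_eq_zero_of_ne huv hγ.symm β
    _ = ∑ γ, P u γ * P v β * P u α := (Fintype.sum_eq_single α fun _ hγ ↦
        hP.mul_mul_eq_zero_of_ne huv hγ β).symm
    _ = P v β * P u α := by
        simp_rw [mul_assoc]
        rw [← Finset.sum_mul, hP.sum_eq_one, one_mul]

theorem mul_add_eq_self_of_triangle (hP : IsOperatorThreeColoring G P) (huv : G.Adj u v)
    (hvw : G.Adj v w) (huw : G.Adj u w) (hαβ : α ≠ β) : P u α * (P v β + P w β) = P u α := by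
  obtain ⟨γ, hsum⟩ := hP.exists_add_add_eq_one hαβ
  -- When `u` has color `α`, the vertex `w` has color `β` exactly when `v` has color `γ`.
  have hw : P u α * P w β = P u α * P v γ * P w β :=
    calc P u α * P w β
        = P u α * (P v α + P v β + P v γ) * P w β := by rw [hsum, mul_one]
      _ = P u α * P v γ * P w β := by
        rw [mul_add, mul_add, hP.mul_eq_zero_of_adj huv, zero_add, add_mul, mul_assoc _ (P v β),
          hP.mul_eq_zero_of_adj hvw, mul_zero, zero_add]
  have hv : P u α * P v γ = P u α * P v γ * P w β := by
    have hα : P u α * P v γ * P w α = 0 :=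
      mul_mul_eq_zero_of_commute_left (hP.mul_eq_zero_of_adj huw α) (hP.commute_of_adj huv α γ)
    have hγ : P u α * P v γ * P w γ = 0 := by
      rw [mul_assoc, hP.mul_eq_zero_of_adj hvw, mul_zero]
    calc P u α * P v γ
        = P u α * P v γ * (P w α + P w β + P w γ) := by rw [hsum, mul_one]
      _ = P u α * P v γ * P w β := by rw [mul_add, mul_add, hα, hγ, zero_add, add_zero]
  calc P u α * (P v β + P w β)
      = P u α * (P v α + P v β + P v γ) := by
        rw [mul_add, mul_add, mul_add, hP.mul_eq_zero_of_adj huv, zero_add, hw, ← hv]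
    _ = P u α := by rw [hsum, mul_one]

theorem add_add_eq_one_of_triangle (hP : IsOperatorThreeColoring G P) (huv : G.Adj u v)
    (hvw : G.Adj v w) (huw : G.Adj u w) (β : Fin 3) : P u β + P v β + P w β = 1 := by
  have hmul (α : Fin 3) : P u α * (P u β + P v β + P w β) = P u α := by
    rcases eq_or_ne α β with rfl | hαβ
    · rw [mul_add, mul_add, (hP.isIdempotentElem u α).eq, hP.mul_eq_zero_of_adj huv,
        hP.mul_eq_zero_of_adj huw, add_zero, add_zero]
    · rw [add_assoc, mul_add, hP.mul_eq_zero_of_ne huv hαβ, zero_add,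
        hP.mul_add_eq_self_of_triangle huv hvw huw hαβ]
  calc P u β + P v β + P w β
      = ∑ α, P u α * (P u β + P v β + P w β) := by
        rw [← Finset.sum_mul, hP.sum_eq_one, one_mul]
    _ = 1 := by simp_rw [hmul, hP.sum_eq_one]

theorem mul_mul_eq_zero_of_triangle (hP : IsOperatorThreeColoring G P) (huv : G.Adj u v)
    (hxy : G.Adj x y) (hyz : G.Adj y z) (hxz : G.Adj x z) (hux : G.Adj u x) (hvz : G.Adj v z)
    (α β : Fin 3) : P u α * P y β * P v α = 0 := by
  have hx : P u α * P x β * P v α = 0 :=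
    mul_mul_eq_zero_of_commute_left (hP.mul_eq_zero_of_adj huv α) (hP.commute_of_adj hux α β)
  have hz : P u α * P z β * P v α = 0 :=
    mul_mul_eq_zero_of_commute_right (hP.mul_eq_zero_of_adj huv α) (hP.commute_of_adj hvz.symm β α)
  calc P u α * P y β * P v α
      = P u α * (P x β + P y β + P z β) * P v α := by
        rw [mul_add, mul_add, add_mul, add_mul, hx, hz, zero_add, add_zero]
    _ = 0 := by
        rw [hP.add_add_eq_one_of_triangle hxy hyz hxz, mul_one, hP.mul_eq_zero_of_adj huv]

end Ring

end IsOperatorThreeColoring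

theorem prism_commutativity_gadget_general {V R : Type*} [Ring R] {G : SimpleGraph V}
    {P : V → Fin 3 → R} (hP : IsOperatorThreeColoring G P) (φ : prismGraph →g G) (α β : Fin 3) :
    Commute (P (φ 0) α) (P (φ 4) β) := by
  have hab : G.Adj (φ 0) (φ 1) := φ.map_adj (by decide)
  have hbc : G.Adj (φ 1) (φ 2) := φ.map_adj (by decide)
  have hac : G.Adj (φ 0) (φ 2) := φ.map_adj (by decide)
  have hde : G.Adj (φ 3) (φ 4) := φ.map_adj (by decide)
  have hef : G.Adj (φ 4) (φ 5) := φ.map_adj (by decide)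
  have hdf : G.Adj (φ 3) (φ 5) := φ.map_adj (by decide)
  have had : G.Adj (φ 0) (φ 3) := φ.map_adj (by decide)
  have hbe : G.Adj (φ 1) (φ 4) := φ.map_adj (by decide)
  have hcf : G.Adj (φ 2) (φ 5) := φ.map_adj (by decide)
  have habc := hP.add_add_eq_one_of_triangle hab hbc hac α
  have haeb : P (φ 0) α * P (φ 4) β * P (φ 1) α = 0 :=
    mul_mul_eq_zero_of_commute_right (hP.mul_eq_zero_of_adj hab α) (hP.commute_of_adj hbe.symm β α)
  have hbea : P (φ 1) α * P (φ 4) β * P (φ 0) α = 0 :=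
    mul_mul_eq_zero_of_commute_left (hP.mul_eq_zero_of_adj hab.symm α) (hP.commute_of_adj hbe α β)
  have haec : P (φ 0) α * P (φ 4) β * P (φ 2) α = 0 :=
    hP.mul_mul_eq_zero_of_triangle hac hde hef hdf had hcf α β
  have hcea : P (φ 2) α * P (φ 4) β * P (φ 0) α = 0 :=
    hP.mul_mul_eq_zero_of_triangle hac.symm hef.symm hde.symm hdf.symm hcf had α β
  calc P (φ 0) α * P (φ 4) β
      = P (φ 0) α * P (φ 4) β * (P (φ 0) α + P (φ 1) α + P (φ 2) α) := by rw [habc, mul_one]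
    _ = P (φ 0) α * P (φ 4) β * P (φ 0) α := by
        rw [mul_add, mul_add, haeb, haec, add_zero, add_zero]
    _ = (P (φ 0) α + P (φ 1) α + P (φ 2) α) * P (φ 4) β * P (φ 0) α := by
        rw [add_mul, add_mul, add_mul, add_mul, hbea, hcea, add_zero, add_zero]
    _ = P (φ 4) β * P (φ 0) α := by rw [habc, one_mul]

/-- The triangular prism graph on vertices `a=0, b=1, c=2, d=3, e=4, f=5` with edges
`(a,b),(b,c),(a,c),(d,e),(e,f),(d,f),(a,d),(b,e),(c,f)`.  Given a 3-coloring operator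
assignment, the projections assigned to the non-adjacent vertices `a` and `e`
commute: `a_α e_β = e_β a_α` for all colors `α, β`. -/
theorem prism_commutativity_gadget {d : ℕ}
    (P : Fin 6 → Fin 3 → Matrix (Fin d) (Fin d) ℂ)
    (h_sa : ∀ v α, (P v α).IsHermitian)
    (h_proj : ∀ v α, P v α * P v α = P v α)
    (h_sum : ∀ v, P v 0 + P v 1 + P v 2 = 1)
    (h_edge : ∀ e ∈ [((0 : Fin 6), (1 : Fin 6)), (1, 2), (0, 2), (3, 4), (4, 5),
        (3, 5), (0, 3), (1, 4), (2, 5)],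
      ∀ α, P e.1 α * P e.2 α = 0 ∧ P e.2 α * P e.1 α = 0) :
    ∀ α β, P 0 α * P 4 β = P 4 β * P 0 α := by
  exact prism_commutativity_gadget_general (.of_fromRel h_proj h_sum fun _ _ huv ↦ h_edge _ huv) .id
end
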